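/- Let A be a Hopf algebra over a field k with bijective antipode S and let P ∈ A be a right group-like projection. The following are equivalent: (1) P is a two-sided group-like projection; (2) S²(N_P) = N_P; (3) Δ(P) ∈ S(N_P) ⊗ N_P. Moreover, if P is a two-sided group-like projection then V_P = N_P = N_P^l = N_P^r. -/

import Mathlib

open scoped TensorProduct

noncomputable section

variable (k : Type*) [Field k] {A : Type*} [Ring A] [HopfAlgebra k A]

/-- `P` is a right group-like projection: a nonzero idempotent with
`Δ(P)(1 ⊗ P) = P ⊗ P = (1 ⊗ P)Δ(P)`. -/
def IsRightGroupLikeProjection (P : A) : Prop :=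
  P ≠ 0 ∧ P * P = P ∧
    Coalgebra.comul (R := k) P * ((1 : A) ⊗ₜ[k] P) = P ⊗ₜ[k] P ∧
    ((1 : A) ⊗ₜ[k] P) * Coalgebra.comul (R := k) P = P ⊗ₜ[k] P

/-- `P` is a left group-like projection: a nonzero idempotent with
`Δ(P)(P ⊗ 1) = P ⊗ P = (P ⊗ 1)Δ(P)`. -/
def IsLeftGroupLikeProjection (P : A) : Prop :=
  P ≠ 0 ∧ P * P = P ∧
    Coalgebra.comul (R := k) P * (P ⊗ₜ[k] (1 : A)) = P ⊗ₜ[k] P ∧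
    (P ⊗ₜ[k] (1 : A)) * Coalgebra.comul (R := k) P = P ⊗ₜ[k] P

/-- A two-sided group-like projection. -/
def IsTwoSidedGroupLikeProjection (P : A) : Prop :=
  IsRightGroupLikeProjection k P ∧ IsLeftGroupLikeProjection k P

/-- `N_P^l = {x : (1 ⊗ P)Δ(x) = x ⊗ P}`. -/
def NPlSet (P : A) : Set A :=
  {x : A | ((1 : A) ⊗ₜ[k] P) * Coalgebra.comul (R := k) x = x ⊗ₜ[k] P}

/-- `N_P^r = {x : Δ(x)(1 ⊗ P) = x ⊗ P}`. -/
def NPrSet (P : A) : Set A :=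
  {x : A | Coalgebra.comul (R := k) x * ((1 : A) ⊗ₜ[k] P) = x ⊗ₜ[k] P}

/-- `N_P = N_P^l ∩ N_P^r`. -/
def NPSet (P : A) : Set A := NPlSet k P ∩ NPrSet k P

/-- `V_P = {(μ ⊗ id)(Δ(P)) : μ ∈ A*}`, the smallest left coideal containing `P`. -/
def VPSet (P : A) : Set A :=
  {x : A | ∃ μ : A →ₗ[k] k,
    x = TensorProduct.lid k A ((TensorProduct.map μ LinearMap.id) (Coalgebra.comul (R := k) P))}

/-- A submodule `N ⊆ A` is a left coideal if `Δ(N) ⊆ A ⊗ N`. -/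
def IsLeftCoideal (N : Submodule k A) : Prop :=
  ∀ x ∈ N, Coalgebra.comul (R := k) x ∈
    LinearMap.range (TensorProduct.map (LinearMap.id : A →ₗ[k] A) N.subtype)

/-- A subalgebra `N ⊆ A` is a left coideal subalgebra if `Δ(N) ⊆ A ⊗ N`. -/
def IsLeftCoidealSubalgebra (N : Subalgebra k A) : Prop :=
  IsLeftCoideal k (Subalgebra.toSubmodule N)

/-!
The defining equation of `N_P^r` says that, in any convolution product `f * g` with `g` an algebra
map, multiplying on the right by `g P` makes the factor `g` disappear: for `x ∈ N_P^r`,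
`(f * g)(x) g(P) = f(x) g(P)`. Taking `f = S ⊗ 1` and `g = Δ` gives
`(1 ⊗ x) Δ(P) = (S(x) ⊗ 1) Δ(P)`, so `N_P^r V_P ⊆ V_P`; the same argument with
`g = (S ⊗ op) ∘ Δ : A → A ⊗ Aᵒᵖ`, which is anti-multiplicative, handles right multiplication of
`V_P` by `N_P^l`.

Each of the three conditions is equivalent to `S(P) = P`. If `S(P) = P`, then `Δ(P)` is fixed by
`S² ⊗ S²`, and since `V_P` is finite-dimensional this forces `S²(V_P) = V_P` and makes every
element of `V_P` a slice of `(S ⊗ id)Δ(P)`. Hence `1 = S(P₍₁₎)P₍₂₎` lies in `V_P`, which gives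
`N_P^r, N_P^l ⊆ V_P`.
-/

open Coalgebra HopfAlgebra TensorProduct WithConv
open Algebra.TensorProduct (includeLeft includeRight)

section Slices

variable {R M N M' N' : Type*} [CommSemiring R] [AddCommMonoid M] [Module R M]
  [AddCommMonoid N] [Module R N] [AddCommMonoid M'] [Module R M'] [AddCommMonoid N'] [Module R N']

/-- The slice map `μ ⊗ id : M ⊗ N → N` of a functional `μ` on `M`, linear in `μ` as well. -/
def leftSlice : (M →ₗ[R] R) →ₗ[R] M ⊗[R] N →ₗ[R] N :=
  LinearMap.llcomp R _ _ _ (TensorProduct.lid R N).toLinearMap ∘ₗ LinearMap.rTensorHom N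

@[simp]
lemma leftSlice_tmul (μ : M →ₗ[R] R) (m : M) (n : N) : leftSlice μ (m ⊗ₜ[R] n) = μ m • n := by
  simp [leftSlice]

lemma leftSlice_map (μ : M' →ₗ[R] R) (f : M →ₗ[R] M') (g : N →ₗ[R] N') (t : M ⊗[R] N) :
    leftSlice μ (TensorProduct.map f g t) = g (leftSlice (μ ∘ₗ f) t) := by
  induction t with
  | zero => simp
  | tmul m n => simp
  | add s t hs ht => simp only [map_add, hs, ht]

lemma eq_of_forall_leftSlice_eq [Module.Free R M] {s t : M ⊗[R] N}
    (h : ∀ μ : M →ₗ[R] R, leftSlice μ s = leftSlice μ t) : s = t := by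
  let b := Module.Free.chooseBasis R M
  apply (TensorProduct.equivFinsuppOfBasisLeft (N := N) b).injective
  ext i
  rw [TensorProduct.equivFinsuppOfBasisLeft_apply, TensorProduct.equivFinsuppOfBasisLeft_apply]
  exact h (b.coord i)

/-- The submodule `{(μ ⊗ id)(t) : μ ∈ M*}` of `N`; for `t = Δ(P)` it is `V_P`. -/
def leftSlices (t : M ⊗[R] N) : Submodule R N := LinearMap.range (leftSlice.flip t)

lemma mem_leftSlices {t : M ⊗[R] N} {n : N} :
    n ∈ leftSlices t ↔ ∃ μ : M →ₗ[R] R, leftSlice μ t = n := Iff.rfl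

lemma leftSlice_mem_leftSlices (μ : M →ₗ[R] R) (t : M ⊗[R] N) : leftSlice μ t ∈ leftSlices t :=
  ⟨μ, rfl⟩

lemma leftSlices_map (f : M →ₗ[R] M') (g : N →ₗ[R] N') (t : M ⊗[R] N) :
    leftSlices (TensorProduct.map f g t) = (leftSlices (f.rTensor N t)).map g := by
  ext n
  simp [mem_leftSlices, leftSlice_map, LinearMap.rTensor]

lemma leftSlices_rTensor_le (f : M →ₗ[R] M') (t : M ⊗[R] N) :
    leftSlices (f.rTensor N t) ≤ leftSlices t := by
  rintro _ ⟨μ, rfl⟩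
  exact ⟨μ ∘ₗ f, (leftSlice_map μ f LinearMap.id t).symm⟩

lemma lTensor_eq_self_of_forall_leftSlices [Module.Free R M] {q : N →ₗ[R] N} {t : M ⊗[R] N}
    (hq : ∀ n ∈ leftSlices t, q n = n) : q.lTensor M t = t :=
  eq_of_forall_leftSlice_eq fun μ => by
    rw [LinearMap.lTensor, leftSlice_map, LinearMap.comp_id, hq _ (leftSlice_mem_leftSlices μ t)]

end Slices

section SlicesOverField

variable {k M N : Type*} [Field k] [AddCommGroup M] [Module k M] [AddCommGroup N] [Module k N]

instance (t : M ⊗[k] N) : FiniteDimensional k (leftSlices t) := by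
  obtain ⟨_, N', -, _, ht⟩ :=
    TensorProduct.exists_finite_submodule_of_setFinite {t} (Set.finite_singleton t)
  obtain ⟨u, hu⟩ := ht rfl
  refine Submodule.finiteDimensional_of_le (S₂ := N') ?_
  rintro _ ⟨μ, rfl⟩
  rw [LinearMap.flip_apply, ← hu, leftSlice_map]
  exact Subtype.prop _

lemma mem_range_mapIncl_leftSlices (t : M ⊗[k] N) :
    t ∈ LinearMap.range
      (TensorProduct.mapIncl (leftSlices (TensorProduct.comm k M N t)) (leftSlices t)) := by
  set U := leftSlices (TensorProduct.comm k M N t)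
  set W := leftSlices t
  obtain ⟨p, hp⟩ := U.subtype.exists_leftInverse_of_injective U.ker_subtype
  obtain ⟨q, hq⟩ := W.subtype.exists_leftInverse_of_injective W.ker_subtype
  have hp_fix : (U.subtype ∘ₗ p).rTensor N t = t := by
    apply (TensorProduct.comm k M N).injective
    rw [LinearMap.rTensor, ← TensorProduct.map_comm]
    exact lTensor_eq_self_of_forall_leftSlices fun x hx =>
      congrArg Subtype.val (LinearMap.congr_fun hp ⟨x, hx⟩)
  have hq_fix : (W.subtype ∘ₗ q).lTensor M t = t :=
    lTensor_eq_self_of_forall_leftSlices fun x hx =>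
      congrArg Subtype.val (LinearMap.congr_fun hq ⟨x, hx⟩)
  refine ⟨TensorProduct.map p q t, ?_⟩
  rw [← LinearMap.comp_apply, ← TensorProduct.map_comp, ← LinearMap.rTensor_comp_lTensor,
    LinearMap.comp_apply, hq_fix, hp_fix]

variable {t : M ⊗[k] N} {f : M →ₗ[k] M} {g : N →ₗ[k] N}

/-- `leftSlices t` is the image under `g` of its subspace `leftSlices (f.rTensor N t)`, so counting
dimensions forces equality. -/
lemma leftSlices_rTensor_of_map_eq_self (h : TensorProduct.map f g t = t) :
    leftSlices (f.rTensor N t) = leftSlices t := by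
  refine Submodule.eq_of_le_of_finrank_le (leftSlices_rTensor_le f t) ?_
  conv_lhs => rw [← h, leftSlices_map]
  exact Submodule.finrank_map_le g _

lemma map_leftSlices_of_map_eq_self (h : TensorProduct.map f g t = t) :
    (leftSlices t).map g = leftSlices t := by
  rw [← leftSlices_rTensor_of_map_eq_self h, ← leftSlices_map, h,
    leftSlices_rTensor_of_map_eq_self h]

end SlicesOverField

section SlicesOfAlgebras

variable {R A B : Type*} [CommSemiring R] [Semiring A] [Algebra R A] [Semiring B] [Algebra R B]

lemma leftSlice_one_tmul_mul (μ : A →ₗ[R] R) (b : B) (t : A ⊗[R] B) :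
    leftSlice μ ((1 ⊗ₜ[R] b) * t) = b * leftSlice μ t := by
  induction t with
  | zero => simp
  | tmul x y => simp
  | add s t hs ht => simp only [mul_add, map_add, hs, ht]

lemma leftSlice_tmul_one_mul (μ : A →ₗ[R] R) (a : A) (t : A ⊗[R] B) :
    leftSlice μ ((a ⊗ₜ[R] 1) * t) = leftSlice (μ ∘ₗ LinearMap.mulLeft R a) t := by
  induction t with
  | zero => simp
  | tmul x y => simp
  | add s t hs ht => simp only [mul_add, map_add, hs, ht]

lemma mul_tmul_one_of_mem_range_mapIncl {U : Submodule R A} {W : Submodule R B} {ε : A →ₗ[R] R}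
    {p : A} (hU : ∀ u ∈ U, u * p = ε u • p) {t : A ⊗[R] B}
    (ht : t ∈ LinearMap.range (TensorProduct.mapIncl U W)) :
    t * (p ⊗ₜ[R] 1) = p ⊗ₜ[R] leftSlice ε t := by
  obtain ⟨t, rfl⟩ := ht
  induction t with
  | zero => simp
  | tmul u w => simp [hU u u.2, TensorProduct.smul_tmul]
  | add s t hs ht => simp only [add_mul, map_add, hs, ht, TensorProduct.tmul_add]

lemma mul'_rTensor_mem_map_mul {M : Type*} [AddCommMonoid M] [Module R M] {U : Submodule R M}
    {W : Submodule R A} (f : M →ₗ[R] A) {t : M ⊗[R] A}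
    (ht : t ∈ LinearMap.range (TensorProduct.mapIncl U W)) :
    LinearMap.mul' R A (f.rTensor A t) ∈ U.map f * W := by
  obtain ⟨t, rfl⟩ := ht
  induction t with
  | zero => simp
  | tmul u w => simpa using Submodule.mul_mem_mul (Submodule.mem_map_of_mem u.2) w.2
  | add s t hs ht => simpa only [map_add] using add_mem hs ht

end SlicesOfAlgebras

section Coalgebras

variable {R C M : Type*} [CommSemiring R] [AddCommMonoid C] [Module R C] [Coalgebra R C]
  [AddCommMonoid M] [Module R M]

lemma leftSlice_counit_comul (x : C) : leftSlice counit (comul (R := R) x) = x := by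
  have h := congrArg (TensorProduct.lid R C) (rTensor_counit_comul (R := R) x)
  rwa [TensorProduct.lid_tmul, one_smul] at h

lemma lTensor_comul_leftSlice {ρ : C →ₗ[R] M} {m : M} {x : C}
    (hx : ρ.lTensor C (comul (R := R) x) = x ⊗ₜ[R] m) (μ : C →ₗ[R] R) :
    ρ.lTensor C (comul (R := R) (leftSlice μ (comul (R := R) x))) =
      leftSlice μ (comul (R := R) x) ⊗ₜ[R] m := by
  have hslice (t : C ⊗[R] C) :
      leftSlice μ (TensorProduct.assoc R C C M (t ⊗ₜ[R] m)) = leftSlice μ t ⊗ₜ[R] m := by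
    induction t with
    | zero => simp
    | tmul c d => simp [TensorProduct.smul_tmul']
    | add s t hs ht => simp only [TensorProduct.add_tmul, map_add, hs, ht]
  calc ρ.lTensor C (comul (R := R) (leftSlice μ (comul (R := R) x)))
    _ = leftSlice μ ((ρ.lTensor C).lTensor C (comul.lTensor C (comul x))) := by
      simp only [LinearMap.lTensor, leftSlice_map, LinearMap.comp_id]
    _ = leftSlice μ (TensorProduct.assoc R C C M (comul.rTensor M (ρ.lTensor C (comul x)))) := by
      rw [← coassoc_apply, LinearMap.lTensor, LinearMap.lTensor,
        TensorProduct.map_map_assoc, TensorProduct.map_id, ← LinearMap.comp_apply,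
        LinearMap.map_comp_rTensor, LinearMap.id_comp,
        ← LinearMap.rTensor_comp_lTensor, LinearMap.comp_apply, LinearMap.lTensor]
    _ = leftSlice μ (comul (R := R) x) ⊗ₜ[R] m := by rw [hx, LinearMap.rTensor_tmul, hslice]

lemma convMul_apply_mul {B : Type*} [Semiring B] [Algebra R B] {ρ : C →ₗ[R] C} {p x : C}
    (hx : ρ.lTensor C (comul (R := R) x) = x ⊗ₜ[R] p) (f : C →ₗ[R] B) {g : C →ₗ[R] B} {b : B}
    (hg : ∀ c, g (ρ c) = g c * b) :
    (toConv f * toConv g) x * b = f x * g p := by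
  have hmul : LinearMap.mulRight R b ∘ₗ LinearMap.mul' R B ∘ₗ TensorProduct.map f g =
      LinearMap.mul' R B ∘ₗ TensorProduct.map f g ∘ₗ ρ.lTensor C := by
    ext c d
    simp [hg, mul_assoc]
  have h := LinearMap.congr_fun hmul (comul x)
  simp only [LinearMap.comp_apply, hx] at h
  simpa using h

variable {A B : Type*} [Semiring A] [Algebra R A] [Semiring B] [Algebra R B]

lemma toConv_map_comp_comul (f : C →ₗ[R] A) (g : C →ₗ[R] B) :
    toConv (TensorProduct.map f g ∘ₗ comul) =
      toConv ((includeLeft : A →ₐ[R] A ⊗[R] B).toLinearMap ∘ₗ f) *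
        toConv ((includeRight : B →ₐ[R] A ⊗[R] B).toLinearMap ∘ₗ g) := by
  rw [LinearMap.convMul_def, ← LinearMap.comp_assoc]
  congr 2
  ext c d
  simp

lemma toConv_comm_comp_map_comp_comul (f : C →ₗ[R] A) (g : C →ₗ[R] B) :
    toConv ((TensorProduct.comm R A B).toLinearMap ∘ₗ TensorProduct.map f g ∘ₗ comul) =
      toConv ((includeRight : A →ₐ[R] B ⊗[R] A).toLinearMap ∘ₗ f) *
        toConv ((includeLeft : B →ₐ[R] B ⊗[R] A).toLinearMap ∘ₗ g) := by
  rw [LinearMap.convMul_def, ← LinearMap.comp_assoc, ← LinearMap.comp_assoc]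
  congr 2
  ext c d
  simp

end Coalgebras

section AntiMultiplicative

variable {R A B A' B' : Type*} [CommSemiring R] [Semiring A] [Algebra R A] [Semiring B]
  [Algebra R B] [Semiring A'] [Algebra R A'] [Semiring B'] [Algebra R B']

lemma map_mul_of_antimultiplicative {f : A →ₗ[R] A'} {g : B →ₗ[R] B'}
    (hf : ∀ a b, f (a * b) = f b * f a) (hg : ∀ a b, g (a * b) = g b * g a) (s t : A ⊗[R] B) :
    TensorProduct.map f g (s * t) = TensorProduct.map f g t * TensorProduct.map f g s := by
  induction s with
  | zero => simp
  | add a b ha hb => simp only [mul_add, add_mul, map_add, ha, hb]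
  | tmul a b =>
    induction t with
    | zero => simp
    | tmul c d => simp [hf, hg]
    | add c d hc hd => simp only [mul_add, add_mul, map_add, hc, hd]

end AntiMultiplicative

section HopfAlgebras

variable {R A B : Type*} [CommSemiring R] [Semiring A] [HopfAlgebra R A] [Semiring B] [Algebra R B]

local notation "S" => antipode R (A := A)
local notation "Δ" => comul (R := R) (A := A)

lemma toConv_comp_antipode_mul_toConv (h : A →ₐ[R] B) :
    toConv (h.toLinearMap ∘ₗ S) * toConv h.toLinearMap = 1 := by
  apply WithConv.ext
  rw [← LinearMap.comp_id h.toLinearMap]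
  refine (LinearMap.algHom_comp_convMul_distrib h (toConv S) (toConv LinearMap.id)).symm.trans ?_
  rw [LinearMap.antipode_mul_id]
  ext a
  simp

lemma toConv_mul_toConv_comp_antipode (h : A →ₐ[R] B) :
    toConv h.toLinearMap * toConv (h.toLinearMap ∘ₗ S) = 1 := by
  apply WithConv.ext
  rw [← LinearMap.comp_id h.toLinearMap]
  refine (LinearMap.algHom_comp_convMul_distrib h (toConv LinearMap.id) (toConv S)).symm.trans ?_
  rw [LinearMap.id_mul_antipode]
  ext a
  simp

lemma toConv_includeLeft_comp_antipode_mul_toConv_comul :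
    toConv ((includeLeft : A →ₐ[R] A ⊗[R] A).toLinearMap ∘ₗ S) * toConv Δ =
      toConv (includeRight : A →ₐ[R] A ⊗[R] A).toLinearMap := by
  have h := toConv_map_comp_comul (R := R) (C := A) (A := A) (B := A) LinearMap.id LinearMap.id
  rw [TensorProduct.map_id, LinearMap.id_comp, LinearMap.comp_id, LinearMap.comp_id] at h
  rw [h, ← mul_assoc, toConv_comp_antipode_mul_toConv, one_mul]

lemma toConv_includeLeft_mul_toConv_map_antipode (f : A →ₗ[R] B) :
    toConv (includeLeft : A →ₐ[R] A ⊗[R] B).toLinearMap * toConv (TensorProduct.map S f ∘ₗ Δ) =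
      toConv ((includeRight : B →ₐ[R] A ⊗[R] B).toLinearMap ∘ₗ f) := by
  rw [toConv_map_comp_comul, ← mul_assoc, toConv_mul_toConv_comp_antipode, one_mul]

lemma comul_antipode (x : A) :
    Δ (S x) = TensorProduct.comm R A A (TensorProduct.map S S (Δ x)) := by
  have hleft : toConv ((TensorProduct.comm R A A).toLinearMap ∘ₗ TensorProduct.map S S ∘ₗ Δ) *
      toConv Δ = 1 := by
    rw [toConv_comm_comp_map_comp_comul, mul_assoc,
      toConv_includeLeft_comp_antipode_mul_toConv_comul, toConv_comp_antipode_mul_toConv]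
  have h := left_inv_eq_right_inv hleft (LinearMap.comul_right_inv (R := R) (C := A))
  exact (LinearMap.congr_fun (toConv_injective h) x).symm

end HopfAlgebras

section Projections

variable {k}

local notation "S" => antipode k (A := A)
local notation "Δ" => comul (R := k) (A := A)

variable {P x : A}

lemma coe_leftSlices_comul (P : A) : (leftSlices (Δ P) : Set A) = VPSet k P := by
  ext x
  exact exists_congr fun μ => eq_comm

lemma mem_NPrSet_iff_lTensor :
    x ∈ NPrSet k P ↔ (LinearMap.mulRight k P).lTensor A (Δ x) = x ⊗ₜ[k] P := by
  have h (t : A ⊗[k] A) : t * (1 ⊗ₜ[k] P) = (LinearMap.mulRight k P).lTensor A t := by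
    induction t with
    | zero => simp
    | tmul a b => simp
    | add s t hs ht => simp only [add_mul, map_add, hs, ht]
  rw [← h]
  rfl

lemma mem_NPlSet_iff_lTensor :
    x ∈ NPlSet k P ↔ (LinearMap.mulLeft k P).lTensor A (Δ x) = x ⊗ₜ[k] P := by
  have h (t : A ⊗[k] A) : (1 ⊗ₜ[k] P) * t = (LinearMap.mulLeft k P).lTensor A t := by
    induction t with
    | zero => simp
    | tmul a b => simp
    | add s t hs ht => simp only [mul_add, map_add, hs, ht]
  rw [← h]
  rfl

lemma leftSlices_comul_subset_NPrSet (hx : x ∈ NPrSet k P) :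
    (leftSlices (Δ x) : Set A) ⊆ NPrSet k P := by
  rintro _ ⟨μ, rfl⟩
  exact mem_NPrSet_iff_lTensor.2 (lTensor_comul_leftSlice (mem_NPrSet_iff_lTensor.1 hx) μ)

lemma leftSlices_comul_subset_NPlSet (hx : x ∈ NPlSet k P) :
    (leftSlices (Δ x) : Set A) ⊆ NPlSet k P := by
  rintro _ ⟨μ, rfl⟩
  exact mem_NPlSet_iff_lTensor.2 (lTensor_comul_leftSlice (mem_NPlSet_iff_lTensor.1 hx) μ)

section Convolution

variable {B : Type*} [Semiring B] [Algebra k B]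

lemma convMul_apply_mul_of_mem_NPrSet (hx : x ∈ NPrSet k P) (f : A →ₗ[k] B) (g : A →ₐ[k] B) :
    (toConv f * toConv g.toLinearMap) x * g P = f x * g P :=
  convMul_apply_mul (mem_NPrSet_iff_lTensor.1 hx) f fun c => map_mul g c P

lemma convMul_apply_mul_of_mem_NPlSet (hx : x ∈ NPlSet k P) (f : A →ₗ[k] B) {g : A →ₗ[k] B}
    (hg : ∀ a b, g (a * b) = g b * g a) :
    (toConv f * toConv g) x * g P = f x * g P :=
  convMul_apply_mul (mem_NPlSet_iff_lTensor.1 hx) f fun c => hg P c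

end Convolution

lemma mul_eq_counit_smul_of_mem_NPrSet (hx : x ∈ NPrSet k P) : x * P = counit (R := k) x • P := by
  have h := convMul_apply_mul_of_mem_NPrSet hx (Algebra.linearMap k A ∘ₗ counit) (AlgHom.id k A)
  rw [← LinearMap.convOne_def, one_mul] at h
  simpa [LinearMap.convOne_def, Algebra.smul_def] using h

lemma antipode_mul_eq_counit_smul_of_mem_NPrSet (hx : x ∈ NPrSet k P) :
    S x * P = counit (R := k) x • P := by
  have h := convMul_apply_mul_of_mem_NPrSet hx S (AlgHom.id k A)
  rw [AlgHom.toLinearMap_id, LinearMap.antipode_mul_id, LinearMap.convOne_apply] at h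
  simpa [Algebra.smul_def] using h.symm

lemma mul_leftSlice_comul_of_mem_NPrSet (hx : x ∈ NPrSet k P) (μ : A →ₗ[k] k) :
    x * leftSlice μ (Δ P) = leftSlice (μ ∘ₗ LinearMap.mulLeft k (S x)) (Δ P) := by
  have h := convMul_apply_mul_of_mem_NPrSet hx
    (includeLeft.toLinearMap ∘ₗ S) (Bialgebra.comulAlgHom k A)
  rw [Bialgebra.toLinearMap_comulAlgHom, toConv_includeLeft_comp_antipode_mul_toConv_comul] at h
  have hslice := congrArg (leftSlice μ) h
  simpa [leftSlice_one_tmul_mul, leftSlice_tmul_one_mul] using hslice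

lemma leftSlice_comul_mul_of_mem_NPlSet (hx : x ∈ NPlSet k P) (μ : A →ₗ[k] k) :
    leftSlice (μ ∘ₗ S) (Δ P) * x = leftSlice (μ ∘ₗ LinearMap.mulLeft k x ∘ₗ S) (Δ P) := by
  let op : A →ₗ[k] Aᵐᵒᵖ := (MulOpposite.opLinearEquiv k).toLinearMap
  have hanti (a b : A) : (TensorProduct.map S op ∘ₗ Δ) (a * b) =
      (TensorProduct.map S op ∘ₗ Δ) b * (TensorProduct.map S op ∘ₗ Δ) a := by
    simp only [LinearMap.comp_apply, Bialgebra.comul_mul]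
    exact map_mul_of_antimultiplicative antipode_mul_antidistrib (fun _ _ => rfl) _ _
  have h := convMul_apply_mul_of_mem_NPlSet hx includeLeft.toLinearMap hanti
  rw [toConv_includeLeft_mul_toConv_map_antipode] at h
  have hslice := congrArg (leftSlice μ) h
  refine MulOpposite.op_injective (?_ : op x * op _ = op _)
  simpa [leftSlice_one_tmul_mul, leftSlice_tmul_one_mul, leftSlice_map,
    LinearMap.comp_assoc] using hslice

lemma mul_mem_leftSlices_comul {v : A} (hx : x ∈ NPrSet k P) (hv : v ∈ leftSlices (Δ P)) :
    x * v ∈ leftSlices (Δ P) := by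
  obtain ⟨μ, rfl⟩ := mem_leftSlices.1 hv
  rw [mul_leftSlice_comul_of_mem_NPrSet hx]
  exact leftSlice_mem_leftSlices _ _

lemma leftSlice_comul_mul_mem {μ : A →ₗ[k] k} (hx : x ∈ NPlSet k P) :
    leftSlice (μ ∘ₗ S) (Δ P) * x ∈ leftSlices (Δ P) := by
  rw [leftSlice_comul_mul_of_mem_NPlSet hx]
  exact leftSlice_mem_leftSlices _ _

lemma mul_eq_counit_smul_of_mem_map_antipode_span {y : A}
    (hy : y ∈ (Submodule.span k (NPSet k P)).map S) :
    y * P = counit (R := k) y • P := by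
  obtain ⟨x, hx, rfl⟩ := hy
  have hle : Submodule.span k (NPSet k P) ≤
      LinearMap.eqLocus (LinearMap.mulRight k P ∘ₗ S) (counit.smulRight P) :=
    Submodule.span_le.2 fun x hx => antipode_mul_eq_counit_smul_of_mem_NPrSet hx.2
  simpa using hle hx

section AntipodeInvariant

variable (hSP : antipode k P = P)
include hSP

lemma map_antipode_comul_eq_comm :
    TensorProduct.map S S (Δ P) = TensorProduct.comm k A A (Δ P) := by
  conv_rhs => rw [← hSP, comul_antipode, TensorProduct.comm_comm]

lemma map_antipode_antipode_comul : TensorProduct.map (S ∘ₗ S) (S ∘ₗ S) (Δ P) = Δ P := by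
  rw [TensorProduct.map_comp, LinearMap.comp_apply, map_antipode_comul_eq_comm hSP,
    TensorProduct.map_comm, map_antipode_comul_eq_comm hSP, TensorProduct.comm_comm]

lemma leftSlices_rTensor_antipode_comul :
    leftSlices (LinearMap.rTensor A S (Δ P)) = leftSlices (Δ P) := by
  refine (leftSlices_rTensor_le S _).antisymm ?_
  calc leftSlices (Δ P)
    _ = leftSlices (LinearMap.rTensor A (S ∘ₗ S) (Δ P)) :=
      (leftSlices_rTensor_of_map_eq_self (g := S ∘ₗ S) (map_antipode_antipode_comul hSP)).symm
    _ = leftSlices (LinearMap.rTensor A S (LinearMap.rTensor A S (Δ P))) := by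
      rw [LinearMap.rTensor_comp_apply]
    _ ≤ leftSlices (LinearMap.rTensor A S (Δ P)) := leftSlices_rTensor_le S _

lemma map_antipode_antipode_leftSlices_comul :
    (leftSlices (Δ P)).map (S ∘ₗ S) = leftSlices (Δ P) :=
  map_leftSlices_of_map_eq_self (map_antipode_antipode_comul hSP)

lemma comul_mem_range_mapIncl_leftSlices :
    Δ P ∈ LinearMap.range
      (TensorProduct.mapIncl ((leftSlices (Δ P)).map S) (leftSlices (Δ P))) := by
  have h := mem_range_mapIncl_leftSlices (Δ P)
  rwa [← map_antipode_comul_eq_comm hSP, leftSlices_map,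
    leftSlices_rTensor_antipode_comul hSP] at h

end AntipodeInvariant

namespace IsRightGroupLikeProjection

lemma mem_NPSet (hP : IsRightGroupLikeProjection k P) : P ∈ NPSet k P := ⟨hP.2.2.2, hP.2.2.1⟩

lemma leftSlices_comul_subset_NPSet (hP : IsRightGroupLikeProjection k P) :
    (leftSlices (Δ P) : Set A) ⊆ NPSet k P :=
  Set.subset_inter (leftSlices_comul_subset_NPlSet hP.mem_NPSet.1)
    (leftSlices_comul_subset_NPrSet hP.mem_NPSet.2)

lemma counit_eq_one (hP : IsRightGroupLikeProjection k P) : counit (R := k) P = 1 := by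
  have h : counit (R := k) P • P = (1 : k) • P := by
    rw [← mul_eq_counit_smul_of_mem_NPrSet hP.mem_NPSet.2, hP.2.1, one_smul]
  exact smul_left_injective k hP.1 h

lemma antipode_mul_self (hP : IsRightGroupLikeProjection k P) : S P * P = P := by
  rw [antipode_mul_eq_counit_smul_of_mem_NPrSet hP.mem_NPSet.2, hP.counit_eq_one, one_smul]

lemma antipode_eq_self_of_comul_mul (hP : IsRightGroupLikeProjection k P)
    (h : Δ P * (P ⊗ₜ[k] 1) = P ⊗ₜ[k] P) : S P = P := by
  have hmul (t : A ⊗[k] A) : LinearMap.mul' k A (LinearMap.rTensor A S (t * (P ⊗ₜ[k] 1))) =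
      S P * LinearMap.mul' k A (LinearMap.rTensor A S t) := by
    induction t with
    | zero => simp
    | tmul a b => simp [antipode_mul_antidistrib, mul_assoc]
    | add a b ha hb => simp only [mul_add, add_mul, map_add, ha, hb]
  have h' := hmul (Δ P)
  rw [h, mul_antipode_rTensor_comul_apply, hP.counit_eq_one] at h'
  simpa [hP.antipode_mul_self] using h'.symm

lemma isTwoSided_of_antipode_eq_self (hP : IsRightGroupLikeProjection k P) (hSP : S P = P) :
    IsTwoSidedGroupLikeProjection k P := by
  let τ : A ⊗[k] A →ₗ[k] A ⊗[k] A :=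
    (TensorProduct.comm k A A).toLinearMap ∘ₗ TensorProduct.map S S
  have hτ_mul (s t : A ⊗[k] A) : τ (s * t) = τ t * τ s :=
    (congrArg _ (map_mul_of_antimultiplicative antipode_mul_antidistrib
      antipode_mul_antidistrib s t)).trans (map_mul (Algebra.TensorProduct.comm k A A) _ _)
  have hτ_comul : τ (Δ P) = Δ P := (comul_antipode P).symm.trans (congrArg Δ hSP)
  have hτ_tmul : τ (P ⊗ₜ[k] P) = P ⊗ₜ[k] P := by simp [τ, hSP]
  have hτ_one_tmul : τ (1 ⊗ₜ[k] P) = P ⊗ₜ[k] 1 := by simp [τ, hSP]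
  refine ⟨hP, hP.1, hP.2.1, ?_, ?_⟩
  · rw [← hτ_comul, ← hτ_one_tmul, ← hτ_mul, hP.2.2.2, hτ_tmul]
  · rw [← hτ_comul, ← hτ_one_tmul, ← hτ_mul, hP.2.2.1, hτ_tmul]

lemma isTwoSided_iff_antipode_eq_self (hP : IsRightGroupLikeProjection k P) :
    IsTwoSidedGroupLikeProjection k P ↔ S P = P :=
  ⟨fun h => hP.antipode_eq_self_of_comul_mul h.2.2.2.1, hP.isTwoSided_of_antipode_eq_self⟩

lemma antipode_eq_self_of_image_antipode_antipode (hP : IsRightGroupLikeProjection k P)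
    (h : (fun a => S (S a)) '' NPSet k P = NPSet k P) : S P = P := by
  obtain ⟨a, ha, haP⟩ := h.symm.subset hP.mem_NPSet
  have hε : counit (R := k) a = 1 := by rw [← hP.counit_eq_one, ← haP]; simp
  have hmul : S a * P = P := by rw [antipode_mul_eq_counit_smul_of_mem_NPrSet ha.2, hε, one_smul]
  calc S P = S (S a * P) := by rw [hmul]
    _ = S P * S (S a) := antipode_mul_antidistrib _ _
    _ = S P * P := congrArg _ haP
    _ = P := hP.antipode_mul_self

lemma antipode_eq_self_of_comul_mem (hP : IsRightGroupLikeProjection k P) {W : Submodule k A}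
    (h : Δ P ∈ LinearMap.range
      (TensorProduct.mapIncl ((Submodule.span k (NPSet k P)).map S) W)) : S P = P :=
  hP.antipode_eq_self_of_comul_mul <| by
    rw [mul_tmul_one_of_mem_range_mapIncl (fun _ => mul_eq_counit_smul_of_mem_map_antipode_span) h,
      leftSlice_counit_comul]

variable (hP : IsRightGroupLikeProjection k P) (hSP : antipode k P = P)
include hP hSP

lemma one_mem_leftSlices_comul : 1 ∈ leftSlices (Δ P) := by
  have hmul_le : leftSlices (Δ P) * leftSlices (Δ P) ≤ leftSlices (Δ P) :=
    Submodule.mul_le.2 fun v hv w hw =>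
      mul_mem_leftSlices_comul (hP.leftSlices_comul_subset_NPSet hv).2 hw
  have h := mul'_rTensor_mem_map_mul S (comul_mem_range_mapIncl_leftSlices hSP)
  rw [← Submodule.map_comp, map_antipode_antipode_leftSlices_comul hSP,
    mul_antipode_rTensor_comul_apply, hP.counit_eq_one, map_one] at h
  exact hmul_le h

lemma NPrSet_eq_leftSlices_comul : NPrSet k P = leftSlices (Δ P) := by
  refine Set.Subset.antisymm (fun x hx => ?_) fun x hx => (hP.leftSlices_comul_subset_NPSet hx).2
  simpa using mul_mem_leftSlices_comul hx (hP.one_mem_leftSlices_comul hSP)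

lemma NPlSet_eq_leftSlices_comul : NPlSet k P = leftSlices (Δ P) := by
  refine Set.Subset.antisymm (fun x hx => ?_) fun x hx => (hP.leftSlices_comul_subset_NPSet hx).1
  have h_one := hP.one_mem_leftSlices_comul hSP
  rw [← leftSlices_rTensor_antipode_comul hSP] at h_one
  obtain ⟨μ, hμ⟩ := mem_leftSlices.1 h_one
  rw [LinearMap.rTensor, leftSlice_map, LinearMap.id_apply] at hμ
  simpa [hμ] using leftSlice_comul_mul_mem (μ := μ) hx

lemma NPSet_eq_leftSlices_comul : NPSet k P = leftSlices (Δ P) := by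
  rw [NPSet, hP.NPlSet_eq_leftSlices_comul hSP, hP.NPrSet_eq_leftSlices_comul hSP, Set.inter_self]

lemma image_antipode_antipode_NPSet : (fun a => S (S a)) '' NPSet k P = NPSet k P := by
  rw [hP.NPSet_eq_leftSlices_comul hSP]
  conv_rhs => rw [← map_antipode_antipode_leftSlices_comul hSP]
  rfl

lemma comul_mem_range_mapIncl_NPSet :
    Δ P ∈ LinearMap.range (TensorProduct.mapIncl ((Submodule.span k (NPSet k P)).map S)
      (Submodule.span k (NPSet k P))) := by
  rw [hP.NPSet_eq_leftSlices_comul hSP, Submodule.span_eq]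
  exact comul_mem_range_mapIncl_leftSlices hSP

end IsRightGroupLikeProjection

end Projections

theorem statement8_general (P : A) (hP : IsRightGroupLikeProjection k P) :
    (IsTwoSidedGroupLikeProjection k P ↔
      (fun a => HopfAlgebra.antipode (R := k) (HopfAlgebra.antipode (R := k) a)) ''
        NPSet k P = NPSet k P) ∧
    (IsTwoSidedGroupLikeProjection k P ↔
      Coalgebra.comul (R := k) P ∈ LinearMap.range (TensorProduct.map
        ((Submodule.span k (NPSet k P)).map (HopfAlgebra.antipode (R := k))).subtype
        (Submodule.span k (NPSet k P)).subtype)) ∧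
    (IsTwoSidedGroupLikeProjection k P →
      VPSet k P = NPSet k P ∧ NPlSet k P = NPSet k P ∧ NPrSet k P = NPSet k P) := by
  rw [hP.isTwoSided_iff_antipode_eq_self]
  refine ⟨⟨hP.image_antipode_antipode_NPSet, hP.antipode_eq_self_of_image_antipode_antipode⟩,
    ⟨hP.comul_mem_range_mapIncl_NPSet, hP.antipode_eq_self_of_comul_mem⟩, fun hSP => ?_⟩
  rw [← coe_leftSlices_comul, hP.NPSet_eq_leftSlices_comul hSP, hP.NPlSet_eq_leftSlices_comul hSP,
    hP.NPrSet_eq_leftSlices_comul hSP]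
  exact ⟨rfl, rfl, rfl⟩

/-- Theorem: for a right group-like projection `P` the following are equivalent:
(1) `P` is two-sided; (2) `S²(N_P) = N_P`; (3) `Δ(P) ∈ S(N_P) ⊗ N_P`.
Moreover if `P` is two-sided then `V_P = N_P = N_P^l = N_P^r`. -/
theorem statement8
    (hS : Function.Bijective (HopfAlgebra.antipode (R := k) : A →ₗ[k] A))
    (P : A) (hP : IsRightGroupLikeProjection k P) :
    (IsTwoSidedGroupLikeProjection k P ↔
      (fun a => HopfAlgebra.antipode (R := k) (HopfAlgebra.antipode (R := k) a)) ''
        NPSet k P = NPSet k P) ∧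
    (IsTwoSidedGroupLikeProjection k P ↔
      Coalgebra.comul (R := k) P ∈ LinearMap.range (TensorProduct.map
        ((Submodule.span k (NPSet k P)).map (HopfAlgebra.antipode (R := k))).subtype
        (Submodule.span k (NPSet k P)).subtype)) ∧
    (IsTwoSidedGroupLikeProjection k P →
      VPSet k P = NPSet k P ∧ NPlSet k P = NPSet k P ∧ NPrSet k P = NPSet k P) :=
  statement8_general k P hP
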